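/- arXiv:2112.12663 — 4 statements merged into one kernel-verified Lean document; each statement's English description precedes it below -/
import Mathlib

section
/- Let R = ℂ[x₁,…,xₙ] and let A be a row-homogeneous ℓ×k matrix over R of ℝ-constant rank, i.e. there is an integer r with rank A(ξ) = r for all ξ ∈ ℝⁿ∖{0}. Then for every associated prime P ≠ (0) of M = R^k/im_R A^⊤, the variety V(P) contains no nonzero real point: V(P) ∩ ℝⁿ ⊆ {0}. -/
/-!
The proof is a minor computation localised at a real point `ξ ≠ 0`, where `A(ξ)` has rank `r`.
Choose constant matrices `D`, `E` compressing `A(ξ)` to the `r × r` identity, `D A(ξ) E = 1`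
(`exists_mul_mul_eq_one`), and put `B = D A E` and `δ = det B`, so that `δ(ξ) = 1`. Since the rank
is `r` at every nonzero real point, the identity `δ A = A E adj(B) D A` holds at those of them where `δ`
does not vanish (`det_smul_eq`). After multiplication by `δ` it holds at all nonzero real points,
which are Zariski dense (`eq_of_eval_real_eq`), so it holds as an identity of polynomial matrices.

In other words, inverting `δ` makes the module `R^k / im A^⊤` torsion-free: if `f v = c A` with
`f ≠ 0`, then `f δ v = c A E adj(B) D A = f v E adj(B) D A`, so `δ v` already lies in the row span
of `A`. If `P` is the annihilator of the class of `v` and is nonzero, this gives `δ ∈ P`, and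
`δ(ξ) ≠ 0` shows that `ξ` is not in `V(P)`.
-/

open MvPolynomial

noncomputable section

/-- A matrix of rank `r` over a field can be compressed to the `r × r` identity. -/
theorem exists_mul_mul_eq_one {K : Type*} [Field K] {l k r : ℕ} (N : Matrix (Fin l) (Fin k) K)
    (hN : N.rank = r) :
    ∃ (D : Matrix (Fin r) (Fin l) K) (E : Matrix (Fin k) (Fin r) K), D * N * E = 1 := by
  let T := Matrix.toLin' N
  have hr : Module.finrank K (LinearMap.range T) = Module.finrank K (Fin r → K) := by
    rw [Module.finrank_fin_fun]
    exact hN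
  let e := LinearEquiv.ofFinrankEq _ _ hr
  obtain ⟨s, hs⟩ := T.rangeRestrict.exists_rightInverse_of_surjective T.range_rangeRestrict
  obtain ⟨L, hL⟩ := (LinearMap.range T).subtype.exists_leftInverse_of_injective
    (Submodule.ker_subtype _)
  refine ⟨LinearMap.toMatrix' (e.toLinearMap ∘ₗ L), LinearMap.toMatrix' (s ∘ₗ e.symm.toLinearMap),
    ?_⟩
  apply Matrix.toLin'.injective
  rw [Matrix.toLin'_mul, Matrix.toLin'_mul, Matrix.toLin'_toMatrix', Matrix.toLin'_toMatrix',
    Matrix.toLin'_one]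
  refine LinearMap.ext fun x => ?_
  have h1 : T (s (e.symm x)) = (e.symm x : Fin l → K) :=
    congrArg Subtype.val (LinearMap.congr_fun hs (e.symm x))
  have h2 : L (e.symm x : Fin l → K) = e.symm x := LinearMap.congr_fun hL (e.symm x)
  change e (L (T (s (e.symm x)))) = x
  rw [h1, h2, e.apply_symm_apply]

/-- If an `r × r` compression `D N E` of a rank-`r` matrix `N` is invertible, then `N` factors
through it as `N = N E (D N E)⁻¹ D N`; stated here with denominators cleared. -/
theorem det_smul_eq {K : Type*} [Field K] {l k r : ℕ} (N : Matrix (Fin l) (Fin k) K)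
    (hN : N.rank = r) (D : Matrix (Fin r) (Fin l) K) (E : Matrix (Fin k) (Fin r) K)
    (hdet : (D * N * E).det ≠ 0) :
    (D * N * E).det • N = N * E * (D * N * E).adjugate * (D * N) := by
  -- `N E` has rank `r`, so its column space is the whole column space of `N`
  have hrank : (N * E).rank = r := by
    apply le_antisymm
    · exact (Matrix.rank_mul_le_left N E).trans hN.le
    · have h := Matrix.rank_mul_le_right D (N * E)
      rw [← Matrix.mul_assoc, Matrix.rank_of_det_ne_zero hdet] at h
      simpa using h
  have hle : LinearMap.range (N * E).mulVecLin ≤ LinearMap.range N.mulVecLin := by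
    rw [Matrix.mulVecLin_mul]
    exact LinearMap.range_comp_le_range _ _
  have hrange : LinearMap.range (N * E).mulVecLin = LinearMap.range N.mulVecLin :=
    Submodule.eq_of_le_of_finrank_eq hle (hrank.trans hN.symm)
  apply Matrix.toLin'.injective
  refine LinearMap.ext fun x => ?_
  obtain ⟨y, hy⟩ : N.mulVecLin x ∈ LinearMap.range (N * E).mulVecLin :=
    hrange ▸ LinearMap.mem_range_self _ x
  simp only [Matrix.mulVecLin_apply] at hy
  rw [Matrix.toLin'_apply, Matrix.toLin'_apply, Matrix.smul_mulVec, ← Matrix.mul_assoc,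
    ← Matrix.mulVec_mulVec, ← hy, Matrix.mulVec_mulVec]
  have : N * E * (D * N * E).adjugate * D * (N * E)
      = N * E * ((D * N * E).adjugate * (D * N * E)) := by
    simp only [Matrix.mul_assoc]
  rw [this, Matrix.adjugate_mul, Matrix.mul_smul, Matrix.mul_one, Matrix.smul_mulVec]

/-- Zariski density of the nonzero real points. -/
theorem eq_of_eval_real_eq {n : ℕ} (hn : 0 < n) (p q : MvPolynomial (Fin n) ℂ)
    (h : ∀ ξ : Fin n → ℝ, ξ ≠ 0 →
      eval (fun i => (ξ i : ℂ)) p = eval (fun i => (ξ i : ℂ)) q) : p = q := by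
  -- points all of whose coordinates are nonzero reals suffice
  refine MvPolynomial.funext_set (fun _ => (fun t : ℝ => (t : ℂ)) '' {0}ᶜ) (fun _ => ?_) ?_
  · exact (Set.finite_singleton (0 : ℝ)).infinite_compl.image Complex.ofReal_injective.injOn
  · intro x hx
    choose ξ hξ hξx using fun i => hx i (Set.mem_univ i)
    obtain rfl : (fun i => (ξ i : ℂ)) = x := funext hξx
    exact h ξ fun h0 => hξ ⟨0, hn⟩ (congrFun h0 _)

/-- If `A` is a row-homogeneous polynomial matrix over
`R = ℂ[x₁,…,xₙ]` of ℝ-constant rank, then for every nonzero associated prime `P`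
of `M = R^k / im_R A^⊤` the variety `V(P)` contains no nonzero real point. -/
theorem real_constant_rank_no_real_points_in_variety_of_nonzero_associated_prime
    {n l k : ℕ} (hn : 0 < n)
    (A : Matrix (Fin l) (Fin k) (MvPolynomial (Fin n) ℂ))
    (hhom : ∀ i : Fin l, ∃ d : ℕ, ∀ j : Fin k, (A i j).IsHomogeneous d)
    (hcr : ∃ r : ℕ, ∀ ξ : Fin n → ℝ, ξ ≠ 0 →
      (A.map (eval (fun i => (ξ i : ℂ)))).rank = r)
    (P : Ideal (MvPolynomial (Fin n) ℂ))
    (hP : P ∈ associatedPrimes (MvPolynomial (Fin n) ℂ)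
      ((Fin k → MvPolynomial (Fin n) ℂ) ⧸
        Submodule.span (MvPolynomial (Fin n) ℂ) (Set.range (fun i j => A i j))))
    (hP0 : P ≠ ⊥) :
    ∀ ξ : Fin n → ℝ, (∀ f ∈ P, eval (fun i => (ξ i : ℂ)) f = 0) → ξ = 0 := by
  intro ξ hξ
  by_contra hne
  obtain ⟨r, hr⟩ := hcr
  obtain ⟨D₀, E₀, hDE⟩ := exists_mul_mul_eq_one _ (hr ξ hne)
  let D : Matrix (Fin r) (Fin l) (MvPolynomial (Fin n) ℂ) := D₀.map C
  let E : Matrix (Fin k) (Fin r) (MvPolynomial (Fin n) ℂ) := E₀.map C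
  let B := D * A * E
  have hD : ∀ x : Fin n → ℂ, D.map (eval x) = D₀ := fun x => by
    ext i j; simp [D]
  have hE : ∀ x : Fin n → ℂ, E.map (eval x) = E₀ := fun x => by
    ext i j; simp [E]
  have hB : ∀ x : Fin n → ℂ, B.map (eval x) = D₀ * A.map (eval x) * E₀ := fun x => by
    rw [Matrix.map_mul, Matrix.map_mul, hD, hE]
  have hdet : ∀ x : Fin n → ℂ, eval x B.det = (D₀ * A.map (eval x) * E₀).det := fun x => by
    rw [RingHom.map_det, RingHom.mapMatrix_apply, hB]
  have hδξ : eval (fun i => (ξ i : ℂ)) B.det = 1 := by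
    rw [hdet, hDE, Matrix.det_one]
  have hδ0 : B.det ≠ 0 := fun h => by simp [h] at hδξ
  have hadj : ∀ x : Fin n → ℂ, B.adjugate.map (eval x)
      = (D₀ * A.map (eval x) * E₀).adjugate := fun x => by
    rw [← hB]
    exact RingHom.map_adjugate (eval x) B
  have key : B.det • A = A * E * B.adjugate * (D * A) := by
    ext1 i j
    -- the extra factor `δ` removes the real points where `δ` vanishes
    apply mul_left_cancel₀ hδ0
    refine eq_of_eval_real_eq hn _ _ fun ζ hζ => ?_
    rw [map_mul, map_mul]
    rcases eq_or_ne (eval (fun i => (ζ i : ℂ)) B.det) 0 with h0 | h0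
    · rw [h0, zero_mul, zero_mul]
    congr 1
    have h1 := det_smul_eq _ (hr ζ hζ) D₀ E₀ (by rwa [← hdet])
    have h2 : (A * E * B.adjugate * (D * A)).map (eval fun i => (ζ i : ℂ))
        = (D₀ * A.map (eval fun i => (ζ i : ℂ)) * E₀).det • A.map (eval fun i => (ζ i : ℂ)) := by
      rw [Matrix.map_mul, Matrix.map_mul, Matrix.map_mul, Matrix.map_mul, hD, hE, hadj, ← h1]
    have h3 := congrFun (congrFun h2 i) j
    rw [Matrix.map_apply] at h3
    rw [h3, ← hdet]
    simp
  have hP' := isAssociatedPrime_iff.1 ((AssociatedPrimes.mem_iff).1 hP)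
  obtain ⟨-, m, hm⟩ := hP'
  obtain ⟨v, rfl⟩ := Submodule.Quotient.mk_surjective _ m
  have hmem : ∀ f, f ∈ P ↔ ∃ c : Fin l → MvPolynomial (Fin n) ℂ, Matrix.vecMul c A = f • v := by
    intro f
    rw [hm, Submodule.mem_colon_singleton, Submodule.mem_bot, ← Submodule.Quotient.mk_smul,
      Submodule.Quotient.mk_eq_zero, Submodule.mem_span_range_iff_exists_fun]
    simp only [Matrix.vecMul_eq_sum]
  obtain ⟨f, hfP, hf0⟩ := Submodule.exists_mem_ne_zero_of_ne_bot hP0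
  obtain ⟨c, hc⟩ := (hmem f).1 hfP
  have hδP : B.det ∈ P := by
    refine (hmem _).2 ⟨Matrix.vecMul v (E * B.adjugate * D), ?_⟩
    have h : f • Matrix.vecMul v (E * B.adjugate * D * A) = f • B.det • v := by
      rw [← Matrix.smul_vecMul, ← hc, Matrix.vecMul_vecMul, smul_comm f, ← hc,
        ← Matrix.vecMul_smul, key]
      simp only [Matrix.mul_assoc]
    rw [Matrix.vecMul_vecMul]
    exact smul_right_injective _ hf0 h
  exact one_ne_zero (hδξ.symm.trans (hξ _ hδP))
end
end

section
/- Let R = ℂ[x₁,…,xₙ] and let A be a row-homogeneous ℓ×k matrix over R of ℂ-constant rank, i.e. there is an integer r with rank A(ξ) = r for all ξ ∈ ℂⁿ∖{0}. Then every associated prime of M = R^k/im_R A^⊤ is either the zero ideal (0) or the maximal ideal (x₁,…,xₙ): Ass(M) ⊆ {(0), (x₁,…,xₙ)}. -/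
/-!
Let `P` be an associated prime of `M`, coming from the class of `m`. There are two cases.

If `P` has no zero outside the origin, then, being proper and prime, `P` is the ideal of
the origin by the Nullstellensatz, and this ideal is `(x₁,…,xₙ)`.

If `P` has a zero `ξ ≠ 0`, then `M` is free near `ξ`, so `P = 0`. Concretely, choose constant
matrices `U`, `V` with `U A(ξ) V = 1` of size `r`, and put `B = U A V`, `Δ = det B`, so that
`Δ(ξ) = 1`. Constancy of the rank gives the polynomial identity `Δ A = A V adj(B) U A`, because it
holds off the origin wherever `Δ ≠ 0` (there `A` and `A V` have the same column space).
For `u` in the row space `N` the identity says that `Δ u = u V adj(B) U A`. If `a m ∈ N` with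
`a ≠ 0`, take `u = a m` and cancel `a`: then `Δ m = m V adj(B) U A ∈ N`. Thus if `P = √Ann(m)`
contained a nonzero element, `Δ` would lie in `P`, contradicting `Δ(ξ) ≠ 0`.
-/

open MvPolynomial

noncomputable section

open Matrix in
/-- A matrix of rank `r` can be compressed to the identity matrix of size `r`. -/
lemma exists_mul_mul_eq_one_of_rank {K : Type*} [Field K] {l k r : ℕ}
    (A : Matrix (Fin l) (Fin k) K) (hr : A.rank = r) :
    ∃ (U : Matrix (Fin r) (Fin l) K) (V : Matrix (Fin k) (Fin r) K), U * A * V = 1 := by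
  subst hr
  let f := A.mulVecLin
  have e : LinearMap.range f ≃ₗ[K] (Fin A.rank → K) :=
    LinearEquiv.ofFinrankEq _ _ (by rw [Module.finrank_fin_fun]; rfl)
  obtain ⟨p, hp⟩ := LinearMap.exists_leftInverse_of_injective
    (LinearMap.range f).subtype (by simp)
  obtain ⟨q, hq⟩ := LinearMap.exists_rightInverse_of_surjective
    (e.toLinearMap ∘ₗ f.rangeRestrict) (by
      rw [LinearMap.range_comp, LinearMap.range_rangeRestrict, Submodule.map_top]
      exact e.range)
  refine ⟨LinearMap.toMatrix' (e.toLinearMap ∘ₗ p), LinearMap.toMatrix' q, ?_⟩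
  have hA : A = LinearMap.toMatrix' f := (LinearMap.toMatrix'_toLin' A).symm
  have key : ((e.toLinearMap ∘ₗ p) ∘ₗ f) ∘ₗ q = LinearMap.id := by
    rw [← hq]
    ext1 i
    ext1
    simp only [LinearMap.comp_apply]
    have := LinearMap.congr_fun hp (f.rangeRestrict (q (LinearMap.single K (fun _ => K) i 1)))
    simp only [LinearMap.comp_apply, Submodule.subtype_apply, LinearMap.codRestrict_apply,
      LinearMap.rangeRestrict, LinearMap.id_apply] at this ⊢
    rw [this]
  calc _ = LinearMap.toMatrix' (e.toLinearMap ∘ₗ p) * LinearMap.toMatrix' f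
        * LinearMap.toMatrix' q := by rw [← hA]
    _ = LinearMap.toMatrix' (((e.toLinearMap ∘ₗ p) ∘ₗ f) ∘ₗ q) := by
      rw [LinearMap.toMatrix'_comp, LinearMap.toMatrix'_comp]
    _ = 1 := by rw [key, LinearMap.toMatrix'_id]

open Matrix in
/-- If a compression `U A V` to size `rank A` is invertible, then `A` factors through it. The
inverse is replaced by the adjugate to keep the formula polynomial. -/
lemma det_smul_eq_of_rank {K : Type*} [Field K] {l k r : ℕ}
    (A : Matrix (Fin l) (Fin k) K) (hr : A.rank = r)
    (U : Matrix (Fin r) (Fin l) K) (V : Matrix (Fin k) (Fin r) K)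
    (h : (U * A * V).det ≠ 0) :
    (U * A * V).det • A = A * V * (U * A * V).adjugate * (U * A) := by
  have hle : LinearMap.range (A * V).mulVecLin ≤ LinearMap.range A.mulVecLin := by
    rw [Matrix.mulVecLin_mul]; exact LinearMap.range_comp_le_range _ _
  have h1 : r ≤ (A * V).rank := by
    have := Matrix.rank_mul_le_right U (A * V)
    rw [← Matrix.mul_assoc, Matrix.rank_of_isUnit _
      ((Matrix.isUnit_iff_isUnit_det _).2 h.isUnit)] at this
    simpa using this
  have heq := Submodule.eq_of_le_of_finrank_le hle (hr.le.trans h1)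
  apply Matrix.ext_of_mulVec_single
  intro i
  have : A *ᵥ Pi.single i 1 ∈ LinearMap.range (A * V).mulVecLin := by
    rw [heq]; exact ⟨_, rfl⟩
  obtain ⟨y, hy⟩ := this
  rw [Matrix.mulVecLin_apply] at hy
  rw [Matrix.smul_mulVec, ← Matrix.mulVec_mulVec, ← Matrix.mulVec_mulVec _ U A, ← hy]
  simp only [Matrix.mulVec_mulVec]
  rw [show A * V * (U * A * V).adjugate * (U * (A * V))
    = A * V * ((U * A * V).adjugate * (U * A * V)) by simp only [Matrix.mul_assoc],
    Matrix.adjugate_mul]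
  simp [Matrix.smul_mulVec]

open Matrix in
/-- Under the factorization `Δ A = A V adj(U A V) U A`, the element `Δ` kills the torsion of the
cokernel of `A` (acting on rows). -/
lemma det_smul_mem_of_smul_mem {R : Type*} [CommRing R] [IsDomain R] {l k r : ℕ}
    (A : Matrix (Fin l) (Fin k) R) (U : Matrix (Fin r) (Fin l) R) (V : Matrix (Fin k) (Fin r) R)
    (h : (U * A * V).det • A = A * V * (U * A * V).adjugate * (U * A))
    (m : Fin k → R) (a : R) (ha : a ≠ 0)
    (hm : a • m ∈ Submodule.span R (Set.range A.row)) :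
    (U * A * V).det • m ∈ Submodule.span R (Set.range A.row) := by
  rw [← _root_.range_vecMulLinear] at hm ⊢
  obtain ⟨c, hc⟩ := hm
  rw [Matrix.vecMulLinear_apply] at hc
  refine ⟨(m ᵥ* (V * (U * A * V).adjugate * U)), ?_⟩
  rw [Matrix.vecMulLinear_apply, Matrix.vecMul_vecMul]
  have h2 : a • ((U * A * V).det • m) = a • (m ᵥ* (V * (U * A * V).adjugate * U * A)) := by
    rw [smul_comm, ← Matrix.smul_vecMul, ← hc, Matrix.vecMul_vecMul, ← Matrix.vecMul_smul, h]
    simp only [Matrix.mul_assoc]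
  exact (smul_right_injective _ ha h2).symm

/-- If `A` is a row-homogeneous polynomial matrix over
`R = ℂ[x₁,…,xₙ]` of ℂ-constant rank, then every associated prime of
`M = R^k / im_R A^⊤` is either the zero ideal or the maximal ideal
`(x₁,…,xₙ)`. -/
theorem complex_constant_rank_associated_primes_subset
    {n l k : ℕ} (hn : 0 < n)
    (A : Matrix (Fin l) (Fin k) (MvPolynomial (Fin n) ℂ))
    (hhom : ∀ i : Fin l, ∃ d : ℕ, ∀ j : Fin k, (A i j).IsHomogeneous d)
    (hcr : ∃ r : ℕ, ∀ ξ : Fin n → ℂ, ξ ≠ 0 → (A.map (eval ξ)).rank = r) :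
    associatedPrimes (MvPolynomial (Fin n) ℂ)
      ((Fin k → MvPolynomial (Fin n) ℂ) ⧸
        Submodule.span (MvPolynomial (Fin n) ℂ) (Set.range (fun i j => A i j)))
      ⊆ {⊥, Ideal.span (Set.range (X : Fin n → MvPolynomial (Fin n) ℂ))} := by
  rintro P ⟨hP, x, hx⟩
  obtain ⟨m, rfl⟩ := Submodule.mkQ_surjective _ x
  obtain ⟨r, hr⟩ := hcr
  by_cases hz : ∃ ξ ∈ zeroLocus ℂ P, ξ ≠ 0
  · left
    obtain ⟨ξ, hξP, hξ⟩ := hz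
    by_contra hbot
    obtain ⟨a, haP, ha⟩ := Submodule.exists_mem_ne_zero_of_ne_bot hbot
    obtain ⟨U₀, V₀, hUV⟩ := exists_mul_mul_eq_one_of_rank (A.map (eval ξ)) (hr ξ hξ)
    let U := U₀.map (C : ℂ →+* MvPolynomial (Fin n) ℂ)
    let V := V₀.map (C : ℂ →+* MvPolynomial (Fin n) ℂ)
    have hev : ∀ η : Fin n → ℂ, (U * A * V).map (eval η) = U₀ * A.map (eval η) * V₀ := by
      intro η
      rw [Matrix.map_mul, Matrix.map_mul]
      congr <;> (ext; simp [U, V])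
    have hdet : ∀ η : Fin n → ℂ,
        eval η (U * A * V).det = (U₀ * A.map (eval η) * V₀).det := by
      intro η
      rw [RingHom.map_det, ← hev]; rfl
    have hξ1 : eval ξ (U * A * V).det = 1 := by rw [hdet, hUV, Matrix.det_one]
    have h0 : (U * A * V).det ≠ 0 := by
      intro h; rw [h] at hξ1; simp at hξ1
    have hid : (U * A * V).det • A = A * V * (U * A * V).adjugate * (U * A) := by
      ext1 i j
      -- The rank is known only off the origin, so a variable is multiplied in as well.
      have hne : (X ⟨0, hn⟩ : MvPolynomial (Fin n) ℂ) * (U * A * V).det ≠ 0 :=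
        mul_ne_zero (X_ne_zero _) h0
      apply mul_left_cancel₀ hne
      apply MvPolynomial.funext
      intro η
      rw [map_mul, map_mul (eval η) (_ * _)]
      by_cases h1 : eval η ((X ⟨0, hn⟩ : MvPolynomial (Fin n) ℂ) * (U * A * V).det) = 0
      · rw [h1]; simp
      congr 1
      rw [map_mul, eval_X] at h1
      have hη : η ≠ 0 := by rintro rfl; simp at h1
      have h2 := right_ne_zero_of_mul h1
      rw [hdet] at h2
      have h3 := det_smul_eq_of_rank (A.map (eval η)) (hr η hη) U₀ V₀ h2
      have h4 : (A * V * (U * A * V).adjugate * (U * A)).map (eval η)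
          = A.map (eval η) * V₀ * (U₀ * A.map (eval η) * V₀).adjugate
            * (U₀ * A.map (eval η)) := by
        rw [Matrix.map_mul, Matrix.map_mul, Matrix.map_mul, Matrix.map_mul, ← hev]
        have : (U * A * V).adjugate.map (eval η) = ((U * A * V).map (eval η)).adjugate :=
          RingHom.map_adjugate (eval η) (U * A * V)
        rw [this]
        have hU : U.map (eval η) = U₀ := by ext; simp [U]
        have hV : V.map (eval η) = V₀ := by ext; simp [V]
        rw [hU, hV]
      have h5 := congrFun (congrFun (h3.trans h4.symm) i) j
      simpa [hdet] using h5
    rw [hx] at haP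
    obtain ⟨s, hs⟩ := haP
    rw [Submodule.mem_colon_singleton, ← map_smul, Submodule.mem_bot, Submodule.mkQ_apply,
      Submodule.Quotient.mk_eq_zero] at hs
    have hΔ := det_smul_mem_of_smul_mem A U V hid m (a ^ s) (pow_ne_zero _ ha) hs
    have hΔP : (U * A * V).det ∈ P := by
      rw [hx]
      apply Ideal.le_radical
      rw [Submodule.mem_colon_singleton, ← map_smul, Submodule.mem_bot, Submodule.mkQ_apply,
        Submodule.Quotient.mk_eq_zero]
      exact hΔ
    have := hξP _ hΔP
    rw [aeval_eq_eval] at this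
    exact one_ne_zero (hξ1.symm.trans this)
  · right
    push Not at hz
    have hv := MvPolynomial.IsPrime.vanishingIdeal_zeroLocus (K := ℂ) P
    apply le_antisymm
    · have h0 : (0 : Fin n → ℂ) ∈ zeroLocus ℂ P := by
        by_contra h0
        apply hP.ne_top
        rw [← hv, Set.eq_empty_of_forall_notMem (s := zeroLocus ℂ P)
          (fun η hη => h0 (hz η hη ▸ hη)), vanishingIdeal_empty]
      intro p hp
      rw [← Set.image_univ, mem_ideal_span_X_image]
      intro d hd
      by_contra! hcon
      have hd0 : d = 0 := by ext i; simpa using hcon i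
      have := h0 p hp
      rw [aeval_eq_eval] at this
      subst hd0
      rw [mem_support_iff] at hd
      apply hd
      rw [← constantCoeff_eq, ← eval_zero]
      exact this
    · rw [Ideal.span_le]
      rintro _ ⟨i, rfl⟩
      rw [← hv]
      intro η hη
      simp [hz η hη]
end
end

section
/- Let R = ℂ[x₁,…,xₙ] and let A be a row-homogeneous ℓ×k matrix over R. Then A is ℝ-elliptic (ker_ℂ A(ξ) = {0} for all ξ ∈ ℝⁿ∖{0}) if and only if for every associated prime P of M = R^k/im_R A^⊤ the variety V(P) contains no nonzero real point: V(P) ∩ ℝⁿ ⊆ {0}. -/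
open MvPolynomial

noncomputable section

/-!
Let `M = R^k / im_R A^⊤`. Both conditions say that no nonzero real point lies in `V(Ann M)`,
because for every `ξ ∈ ℂⁿ`

* `ker A(ξ) = 0` iff `ξ ∉ V(Ann M)`, and
* `ξ ∈ V(Ann M)` iff `ξ ∈ V(P)` for some associated prime `P` of `M`.

If `ker A(ξ) = 0`, choose a constant left inverse `B` of `A(ξ)`; then `g = det (B A)` satisfies
`g(ξ) = 1`, and multiplying `B A` by its adjugate shows that `g` annihilates `M`
(`exists_annihilator_eval_eq_one`). As `Ann M ≤ P` for each associated prime `P`, the point `ξ`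
is not in `V(P)`. Conversely, if `A(ξ) v = 0` with `v ≠ 0` and `f ∈ Ann M`, each `f e_j` is a
combination of rows of `A`, and pairing with `v` at `ξ` gives `f(ξ) v_j = 0`, so `f(ξ) = 0`
(`eval_eq_zero_of_mem_annihilator`). Hence the prime ideal of polynomials vanishing at `ξ` contains
`Ann M`, and therefore a minimal prime over `Ann M`, which is an associated prime of `M`.
-/

/-- The module `R^k / im_R A^⊤`: the quotient of `R^k` by the submodule spanned by the rows of `A`. -/
abbrev RowCoker {n l k : ℕ} (A : Matrix (Fin l) (Fin k) (MvPolynomial (Fin n) ℂ)) : Type :=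
  (Fin k → MvPolynomial (Fin n) ℂ) ⧸
    Submodule.span (MvPolynomial (Fin n) ℂ) (Set.range (fun i j => A i j))

lemma mem_annihilator_rowCoker {n l k : ℕ}
    {A : Matrix (Fin l) (Fin k) (MvPolynomial (Fin n) ℂ)} {f : MvPolynomial (Fin n) ℂ} :
    f ∈ Module.annihilator (MvPolynomial (Fin n) ℂ) (RowCoker A) ↔
      ∀ w : Fin k → MvPolynomial (Fin n) ℂ, f • w ∈
        Submodule.span (MvPolynomial (Fin n) ℂ) (Set.range (fun i j => A i j)) := by
  rw [Module.mem_annihilator, (Submodule.mkQ_surjective _).forall]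
  refine forall_congr' fun w => ?_
  rw [← map_smul, Submodule.mkQ_apply, Submodule.Quotient.mk_eq_zero]

/-- A point `x` with `ker A(x) = 0` lies outside `V(Ann M)`: the determinant of `B A`, for a constant
left inverse `B` of `A(x)`, annihilates `M` and takes the value `1` at `x`. -/
lemma exists_annihilator_eval_eq_one {n l k : ℕ}
    (A : Matrix (Fin l) (Fin k) (MvPolynomial (Fin n) ℂ)) (x : Fin n → ℂ)
    (hker : LinearMap.ker ((A.map (eval x)).mulVecLin) = ⊥) :
    ∃ g ∈ Module.annihilator (MvPolynomial (Fin n) ℂ) (RowCoker A), eval x g = 1 := by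
  obtain ⟨b, hb⟩ := LinearMap.exists_leftInverse_of_injective _ hker
  obtain ⟨B, rfl⟩ : ∃ B, Matrix.toLin' B = b := ⟨_, Matrix.toLin'_toMatrix' b⟩
  have hBA : B * A.map (eval x) = 1 := by
    apply Matrix.toLin'.injective
    rw [Matrix.toLin'_mul, Matrix.toLin'_one, ← hb]
    rfl
  obtain ⟨B', hB'⟩ : ∃ B' : Matrix (Fin k) (Fin l) (MvPolynomial (Fin n) ℂ),
      B'.map (eval x) = B := ⟨B.map MvPolynomial.C, by ext i j; simp⟩
  obtain ⟨C, hC⟩ : ∃ C : Matrix (Fin k) (Fin k) (MvPolynomial (Fin n) ℂ), C = B' * A := ⟨_, rfl⟩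
  refine ⟨C.det, mem_annihilator_rowCoker.2 fun w => ?_, ?_⟩
  · have key : C.det • w = Matrix.vecMul (Matrix.vecMul w (C.adjugate * B')) A := by
      rw [Matrix.vecMul_vecMul, Matrix.mul_assoc, ← hC, Matrix.adjugate_mul, Matrix.vecMul_smul,
        Matrix.vecMul_one]
    rw [key, Matrix.vecMul_eq_sum]
    exact Submodule.sum_mem _ fun i _ =>
      Submodule.smul_mem _ _ (Submodule.subset_span ⟨i, rfl⟩)
  · have hmap : C.map (eval x) = 1 := by
      rw [hC, Matrix.map_mul, hB', hBA]
    rw [RingHom.map_det, RingHom.mapMatrix_apply, hmap, Matrix.det_one]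

lemma eval_eq_zero_of_mem_annihilator {n l k : ℕ}
    (A : Matrix (Fin l) (Fin k) (MvPolynomial (Fin n) ℂ)) (x : Fin n → ℂ)
    {v : Fin k → ℂ} (hv : v ≠ 0) (hAv : (A.map (eval x)).mulVec v = 0)
    {f : MvPolynomial (Fin n) ℂ}
    (hf : f ∈ Module.annihilator (MvPolynomial (Fin n) ℂ) (RowCoker A)) :
    eval x f = 0 := by
  have hspan : ∀ w ∈ Submodule.span (MvPolynomial (Fin n) ℂ) (Set.range (fun i j => A i j)),
      ∑ j, eval x (w j) * v j = 0 := by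
    intro w hw
    induction hw using Submodule.span_induction with
    | mem w hw =>
      obtain ⟨i, rfl⟩ := hw
      simpa [Matrix.mulVec, dotProduct] using congrFun hAv i
    | zero => simp
    | add a b _ _ ha hb => simp [add_mul, Finset.sum_add_distrib, ha, hb]
    | smul c a _ ha => simp [mul_assoc, ← Finset.mul_sum, ha]
  obtain ⟨j, hj⟩ := Function.ne_iff.1 hv
  have h := hspan _ (mem_annihilator_rowCoker.1 hf (Pi.single j 1))
  have h2 : eval x f * v j = 0 := by
    simpa [Pi.single_apply, apply_ite (eval x), ite_mul, mul_ite] using h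
  exact (mul_eq_zero.1 h2).resolve_right hj

/-- A row-homogeneous polynomial matrix `A` is ℝ-elliptic
(`ker_ℂ A(ξ) = {0}` for all `ξ ∈ ℝⁿ∖{0}`) iff for every associated prime `P` of
`M = R^k / im_R A^⊤` the variety `V(P)` contains no nonzero real point. -/
theorem real_elliptic_iff_no_real_points_in_varieties_of_associated_primes
    {n l k : ℕ} (hn : 0 < n)
    (A : Matrix (Fin l) (Fin k) (MvPolynomial (Fin n) ℂ))
    (hhom : ∀ i : Fin l, ∃ d : ℕ, ∀ j : Fin k, (A i j).IsHomogeneous d) :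
    (∀ ξ : Fin n → ℝ, ξ ≠ 0 →
        LinearMap.ker ((A.map (eval (fun i => (ξ i : ℂ)))).mulVecLin) = ⊥)
    ↔ ∀ P ∈ associatedPrimes (MvPolynomial (Fin n) ℂ)
        ((Fin k → MvPolynomial (Fin n) ℂ) ⧸
          Submodule.span (MvPolynomial (Fin n) ℂ) (Set.range (fun i j => A i j))),
        ∀ ξ : Fin n → ℝ, (∀ f ∈ P, eval (fun i => (ξ i : ℂ)) f = 0) → ξ = 0 := by
  constructor
  · intro hell P hP ξ hξ
    by_contra hne
    obtain ⟨g, hg, hg1⟩ := exists_annihilator_eval_eq_one A _ (hell ξ hne)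
    have hg' := hg
    rw [← Submodule.annihilator_top] at hg'
    exact zero_ne_one ((hξ g (IsAssociatedPrime.annihilator_le hP hg')).symm.trans hg1)
  · intro hass ξ hne
    rw [LinearMap.ker_eq_bot']
    intro v hAv
    by_contra hv
    have hle : Module.annihilator (MvPolynomial (Fin n) ℂ) (RowCoker A) ≤
        RingHom.ker (eval fun i => (ξ i : ℂ)) := fun f hf =>
      eval_eq_zero_of_mem_annihilator A _ hv hAv hf
    have := RingHom.ker_isPrime (eval fun i => (ξ i : ℂ))
    obtain ⟨P, hPmin, hPle⟩ := Ideal.exists_minimalPrimes_le hle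
    exact hne (hass P (Module.associatedPrimes.minimalPrimes_annihilator_subset_associatedPrimes
      _ _ hPmin) ξ fun f hf => hPle hf)
end
end

section
/- Let R = ℂ[x₁,…,xₙ], let A be a row-homogeneous ℓ×k matrix over R of ℝ-constant rank (there is an integer r with rank A(ξ) = r for all ξ ∈ ℝⁿ∖{0}), and let S be a syzygy matrix of A (a k×k' matrix over R whose columns generate ker_R A). Then for every ξ ∈ ℝⁿ∖{0}, the null space of A(ξ) equals the column space of S(ξ): ker_ℂ A(ξ) = im_ℂ S(ξ). -/
/-!
Pointwise exactness is a local statement on the open set where a maximal minor does not vanish.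
Fix a real `ξ ≠ 0` and `v ∈ ker A(ξ)`, and let `r` be the constant rank. Constant matrices `P`, `Q`
with `P * A(ξ) * Q = 1` of size `r` exist (`exists_mul_mul_eq_one`); put `M = P * A * Q` over the
polynomial ring and `p = det M`, so `p(ξ) = 1`. Cramer's rule turns `v` into the polynomial vector
`w = p • v - Q * adj M * P * A * v`, which satisfies `P * A * w = 0` and `w(ξ) = v`.

At a real point `η ≠ 0` with `p(η) ≠ 0` the matrix `P * A(η)` still has rank `r = rank A(η)`, so the
two matrices have the same kernel (`mulVec_eq_zero_of_isUnit_det`) and `A(η) w(η) = 0`. The other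
real points form a proper algebraic subset, and real points are Zariski dense in complex affine
space (`eq_zero_of_eval_real`), so `A * w = 0`. Hence `w = S * u` for some `u`, and evaluating at `ξ`
gives `v = S(ξ) u(ξ)`. The reverse inclusion is the evaluation of `A * S = 0`.
-/

open MvPolynomial

noncomputable section

/-- Real points are Zariski dense in complex affine space. -/
lemma eq_zero_of_eval_real {n : ℕ} (f : MvPolynomial (Fin n) ℂ)
    (h : ∀ η : Fin n → ℝ, eval (fun i => (η i : ℂ)) f = 0) : f = 0 := by
  refine funext_set (fun _ => Set.range ((↑) : ℝ → ℂ))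
    (fun _ => Set.infinite_range_of_injective Complex.ofReal_injective) (fun x hx => ?_)
  choose η hη using fun i => hx i (Set.mem_univ i)
  obtain rfl : (fun i => (η i : ℂ)) = x := funext hη
  simpa using h η

/-- A complex matrix of rank `r` is brought to the identity of size `r` by a projection of the
target and an embedding into the source. -/
lemma exists_mul_mul_eq_one_s17 {l k r : ℕ} (B : Matrix (Fin l) (Fin k) ℂ) (hB : B.rank = r) :
    ∃ (P : Matrix (Fin r) (Fin l) ℂ) (Q : Matrix (Fin k) (Fin r) ℂ), P * B * Q = 1 := by
  let f := B.mulVecLin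
  have e : LinearMap.range f ≃ₗ[ℂ] (Fin r → ℂ) :=
    LinearEquiv.ofFinrankEq _ _ (by rw [Module.finrank_fin_fun]; exact hB)
  obtain ⟨g, hg⟩ := LinearMap.exists_extend e.toLinearMap
  obtain ⟨q, hq⟩ := (e.toLinearMap ∘ₗ f.rangeRestrict).exists_rightInverse_of_surjective
    (by rw [LinearMap.range_comp, LinearMap.range_rangeRestrict, Submodule.map_top,
      LinearEquiv.range])
  refine ⟨LinearMap.toMatrix' g, LinearMap.toMatrix' q, ?_⟩
  have hgf : g ∘ₗ f = e.toLinearMap ∘ₗ f.rangeRestrict := by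
    rw [← hg]; rfl
  have : g ∘ₗ f ∘ₗ q = LinearMap.id := by rw [← LinearMap.comp_assoc, hgf, hq]
  have h2 := congrArg LinearMap.toMatrix' this
  rw [LinearMap.toMatrix'_comp, LinearMap.toMatrix'_comp, LinearMap.toMatrix'_id] at h2
  rw [Matrix.mul_assoc]
  simpa [f, ← Matrix.toLin'_apply'] using h2

/-- If `P * B * Q` is invertible of size `rank B`, then `P` is injective on the range of `B`:
the inclusion `ker B ≤ ker (P * B)` is an equality by rank–nullity. -/
lemma mulVec_eq_zero_of_isUnit_det {l k r : ℕ} (B : Matrix (Fin l) (Fin k) ℂ) (hB : B.rank = r)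
    (P : Matrix (Fin r) (Fin l) ℂ) (Q : Matrix (Fin k) (Fin r) ℂ)
    (hu : IsUnit (P * B * Q).det) (w : Fin k → ℂ)
    (hw : (P * B).mulVec w = 0) : B.mulVec w = 0 := by
  have hrank : (P * B).rank = r := by
    apply le_antisymm
    · simpa using (P * B).rank_le_height
    · have h1 := Matrix.rank_of_isUnit _ ((Matrix.isUnit_iff_isUnit_det _).2 hu)
      have h2 := Matrix.rank_mul_le_left (P * B) Q
      simp only [Fintype.card_fin] at h1
      omega
  have hle : LinearMap.ker B.mulVecLin ≤ LinearMap.ker (P * B).mulVecLin := by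
    intro x hx
    simp only [LinearMap.mem_ker, Matrix.mulVecLin_apply] at hx ⊢
    rw [← Matrix.mulVec_mulVec, hx, Matrix.mulVec_zero]
  have h1 := LinearMap.finrank_range_add_finrank_ker B.mulVecLin
  have h2 := LinearMap.finrank_range_add_finrank_ker (P * B).mulVecLin
  unfold Matrix.rank at hB hrank
  have heq := Submodule.eq_of_le_of_finrank_eq hle (by omega)
  have : w ∈ LinearMap.ker B.mulVecLin := by
    rw [heq]; simpa using hw
  simpa using this

/-- If `A` is row-homogeneous of ℝ-constant rank and `S` is a
syzygy matrix of `A`, then `ker_ℂ A(ξ) = im_ℂ S(ξ)` for every `ξ ∈ ℝⁿ∖{0}`. -/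
theorem constant_rank_pointwise_exactness_real
    {n l k k' : ℕ} (hn : 0 < n)
    (A : Matrix (Fin l) (Fin k) (MvPolynomial (Fin n) ℂ))
    (hhom : ∀ i : Fin l, ∃ d : ℕ, ∀ j : Fin k, (A i j).IsHomogeneous d)
    (hcr : ∃ r : ℕ, ∀ ξ : Fin n → ℝ, ξ ≠ 0 →
      (A.map (eval (fun i => (ξ i : ℂ)))).rank = r)
    (S : Matrix (Fin k) (Fin k') (MvPolynomial (Fin n) ℂ))
    (hS : LinearMap.range S.mulVecLin = LinearMap.ker A.mulVecLin) :
    ∀ ξ : Fin n → ℝ, ξ ≠ 0 →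
      LinearMap.ker ((A.map (eval (fun i => (ξ i : ℂ)))).mulVecLin)
        = LinearMap.range ((S.map (eval (fun i => (ξ i : ℂ)))).mulVecLin) := by
  obtain ⟨r, hr⟩ := hcr
  intro ξ hξ
  apply le_antisymm
  · intro v hv
    simp only [LinearMap.mem_ker, Matrix.mulVecLin_apply] at hv
    obtain ⟨P, Q, hPQ⟩ := exists_mul_mul_eq_one_s17 _ (hr ξ hξ)
    set P' : Matrix (Fin r) (Fin l) (MvPolynomial (Fin n) ℂ) := P.map C with hP'
    set Q' : Matrix (Fin k) (Fin r) (MvPolynomial (Fin n) ℂ) := Q.map C with hQ'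
    set v' : Fin k → MvPolynomial (Fin n) ℂ := fun j => C (v j) with hv'
    set M := P' * A * Q' with hM
    have hevP : ∀ x : Fin n → ℂ, P'.map (eval x) = P := by
      intro x; ext i j; simp [hP']
    have hevQ : ∀ x : Fin n → ℂ, Q'.map (eval x) = Q := by
      intro x; ext i j; simp [hQ']
    have hevM : ∀ x : Fin n → ℂ, M.map (eval x) = P * A.map (eval x) * Q := by
      intro x
      rw [hM, Matrix.map_mul, Matrix.map_mul, hevP, hevQ]
    have hdet : ∀ x : Fin n → ℂ, eval x M.det = (P * A.map (eval x) * Q).det := by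
      intro x
      rw [RingHom.map_det, ← hevM]; rfl
    have hevmul : ∀ (x : Fin n → ℂ) {a b : ℕ}
        (N : Matrix (Fin a) (Fin b) (MvPolynomial (Fin n) ℂ)) (u : Fin b → MvPolynomial (Fin n) ℂ),
        (fun i => eval x (N.mulVec u i)) = (N.map (eval x)).mulVec (fun j => eval x (u j)) := by
      intro x a b N u
      ext i
      exact RingHom.map_mulVec (eval x) N u i
    set w : Fin k → MvPolynomial (Fin n) ℂ :=
      M.det • v' - Q'.mulVec (M.adjugate.mulVec (P'.mulVec (A.mulVec v'))) with hw
    have hPAw : (P' * A).mulVec w = 0 := by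
      rw [hw, Matrix.mulVec_sub, Matrix.mulVec_mulVec _ (P' * A) Q', ← hM, Matrix.mulVec_mulVec,
        Matrix.mul_adjugate, Matrix.mulVec_smul, Matrix.smul_mulVec, Matrix.one_mulVec,
        Matrix.mulVec_mulVec, sub_self]
    have hdet0 : M.det ≠ 0 := by
      intro h0
      have h1 := hdet (fun i => (ξ i : ℂ))
      rw [h0, hPQ] at h1
      simp at h1
    have hAw : A.mulVec w = 0 := by
      ext1 i
      -- The factor `X ⟨0, hn⟩` disposes of the origin, where nothing is known about the rank.
      have hz : M.det * X ⟨0, hn⟩ * A.mulVec w i = 0 := by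
        apply eq_zero_of_eval_real
        intro η
        rw [map_mul, map_mul, eval_X]
        by_cases hη : η = 0
        · simp [hη]
        by_cases hd : eval (fun i => (η i : ℂ)) M.det = 0
        · simp [hd]
        have h1 := hevmul (fun i => (η i : ℂ)) (P' * A) w
        rw [hPAw, Matrix.map_mul, hevP] at h1
        have h2 := mulVec_eq_zero_of_isUnit_det _ (hr η hη) P Q
          (by rw [← hdet]; exact isUnit_iff_ne_zero.2 hd) _
          (h1.symm.trans (by ext; simp))
        rw [← hevmul] at h2
        have h3 := congrFun h2 i
        simp only [Pi.zero_apply] at h3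
        rw [h3, mul_zero]
      exact (mul_eq_zero.1 hz).resolve_left (mul_ne_zero hdet0 (X_ne_zero _))
    have hmem : w ∈ LinearMap.range S.mulVecLin := by
      rw [hS]; simpa using hAw
    obtain ⟨u, hu⟩ := hmem
    rw [Matrix.mulVecLin_apply] at hu
    refine ⟨fun j => eval (fun i => (ξ i : ℂ)) (u j), ?_⟩
    rw [Matrix.mulVecLin_apply, ← hevmul, hu]
    have hvv : (fun j => eval (fun i => (ξ i : ℂ)) (v' j)) = v := by
      ext j; simp [hv']
    have hq : (fun j => eval (fun i => (ξ i : ℂ))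
        (Q'.mulVec (M.adjugate.mulVec (P'.mulVec (A.mulVec v'))) j)) = 0 := by
      rw [hevmul, hevmul, hevmul, hevmul, hvv, hv, Matrix.mulVec_zero, Matrix.mulVec_zero,
        Matrix.mulVec_zero]
    ext j
    have hqj := congrFun hq j
    have hvj := congrFun hvv j
    simp only [Pi.zero_apply] at hqj hvj
    rw [hw, Pi.sub_apply, Pi.smul_apply, smul_eq_mul, map_sub, map_mul, hqj, hvj, hdet, hPQ,
      Matrix.det_one, one_mul, sub_zero]
  · rintro _ ⟨c, rfl⟩
    have hAS : A * S = 0 := by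
      apply Matrix.ext_of_mulVec_single
      intro j
      set u : Fin k' → MvPolynomial (Fin n) ℂ := Pi.single j 1
      have : S.mulVecLin u ∈ LinearMap.ker A.mulVecLin := hS ▸ ⟨u, rfl⟩
      simpa using this
    rw [LinearMap.mem_ker, Matrix.mulVecLin_apply, Matrix.mulVecLin_apply, Matrix.mulVec_mulVec,
      ← Matrix.map_mul, hAS]
    simp
end
end
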